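/- arXiv:1405.6105 — 2 statements merged into one kernel-verified Lean document; each statement's English description precedes it below -/
import Mathlib

section
/- (Nagata) Let k, K, L be fields such that: (i) k ⊆ K, and k ⊆ L ⊆ K(x) where x is transcendental over K; (ii) K is finitely generated as a field extension of k; (iii) L ⊄ K. Then there exist a field M containing k and a field embedding of L into the rational function field M(t) such that M(t) is a finite extension of the image of L. -/
universe u v

/-!
Write `E = K(x)`. Since `L` contains a nonconstant function, `E` is algebraic over `L[K]`, so some
`Y ⊆ K` is a transcendence basis of `E` over `L`. Extend `Y` by `Z ⊆ K` to a transcendence basis of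
`K` over `k`; then `{x} ∪ Z` has as many elements as a transcendence basis of `L` over `k`.

Let `Ω` be algebraically closed with a transcendence basis `ζ` over `k` indexed by `Z`. Sending
`Y` to sufficiently general elements algebraic over `k`, `Z` to `ζ` and `x` to `x` defines a
partial `k`-homomorphism from `K(x)` to `Ω(x)`, whose domain can be made to contain any given finite
set. Because the elements of `Y` become algebraic, `Ω(x)` is algebraic over the field generated by
the images of a transcendence basis of `L`; by the count above these images are algebraically
independent, so the specialization is injective on generators of `L` and extends to an embedding of
`L` into `Ω(x)` over whose image `Ω(x)` is algebraic. The image lies in `M(x)` for a finitely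
generated field `M`, and `M(x)` is algebraic and finitely generated over it, hence finite.
-/

/-! ### Finitely generated extensions -/

-- `E ⊗[k] E` is noetherian, so finitely many of the elements `l ⊗ 1 - 1 ⊗ l` with `l ∈ L` generate
-- the ideal spanned by all of them. Over the subfield `M` generated by these finitely many `l` the
-- ideal becomes zero, and by faithfully flat descent `l ⊗ 1 = 1 ⊗ l` in `E ⊗[M] E` forces `l ∈ M`.
open scoped TensorProduct in
theorem intermediateField_fg_of_essFiniteType {k E : Type*} [Field k] [Field E] [Algebra k E]
    [Algebra.EssFiniteType k E] (L : IntermediateField k E) : L.FG := by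
  classical
  have : IsNoetherianRing (E ⊗[k] E) := Algebra.EssFiniteType.isNoetherianRing E _
  obtain ⟨s, hsL, hs⟩ := (Submodule.fg_span_iff_fg_span_finset_subset _).1
    (IsNoetherian.noetherian
      (Ideal.span (Algebra.TensorProduct.includeLeftSubRight k E '' (L : Set E))))
  obtain ⟨t, ht, hst⟩ := Finset.subset_set_image_iff.1 hsL
  refine ⟨t, (IntermediateField.adjoin_le_iff.2 ht).antisymm fun l hl => ?_⟩
  let M := IntermediateField.adjoin k (t : Set E)
  let π : E ⊗[k] E →ₐ[E] E ⊗[M] E := Algebra.TensorProduct.mapOfCompatibleSMul M k E E E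
  have hπ (a : E) : π (Algebra.TensorProduct.includeLeftSubRight k E a) =
      Algebra.TensorProduct.includeLeftSubRight M E a := by simp [π]
  have hker : Ideal.span (Algebra.TensorProduct.includeLeftSubRight k E '' (L : Set E)) ≤
      RingHom.ker π := by
    refine hs.trans_le (Ideal.span_le.2 ?_)
    simp only [← hst, Finset.coe_image, Set.image_subset_iff]
    intro a ha
    exact (hπ a).trans (Algebra.TensorProduct.includeLeftSubRight_algebraMap_zero
      (⟨a, IntermediateField.subset_adjoin k _ ha⟩ : M))
  obtain ⟨m, rfl⟩ := (Algebra.IsEffective.of_faithfullyFlat M E l).1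
    ((hπ l).symm.trans (hker (Ideal.subset_span ⟨l, hl, rfl⟩)))
  exact m.2

instance essFiniteType_ratFunc (k K : Type*) [Field k] [Field K] [Algebra k K]
    [Algebra.EssFiniteType k K] : Algebra.EssFiniteType k (RatFunc K) :=
  have : Algebra.EssFiniteType (Polynomial K) (RatFunc K) :=
    .of_isLocalization _ (nonZeroDivisors (Polynomial K))
  have : Algebra.EssFiniteType K (RatFunc K) := .comp K (Polynomial K) (RatFunc K)
  .comp k K (RatFunc K)

/-! ### Partial homomorphisms -/

/-- A partially defined homomorphism of `k`-algebras from `E` to `F`; for fields this plays the role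
of a place or specialization, without requiring the domain to be a valuation ring. -/
structure PartialAlgHom (k E F : Type*) [CommSemiring k] [Semiring E] [Semiring F]
    [Algebra k E] [Algebra k F] where
  domain : Subalgebra k E
  toAlgHom : domain →ₐ[k] F

namespace PartialAlgHom

variable {k E F : Type*} [CommSemiring k] [Semiring E] [Semiring F]
  [Algebra k E] [Algebra k F]

/-- `Ψ.Sends a b` says that `Ψ` is defined at `a`, with value `b`. -/
def Sends (Ψ : PartialAlgHom k E F) (a : E) (b : F) : Prop :=
  ∃ h : a ∈ Ψ.domain, Ψ.toAlgHom ⟨a, h⟩ = b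

/-- The preimage of a subalgebra under a partial homomorphism, as a subalgebra of the ambient `E`
rather than of the domain. -/
def comap (Ψ : PartialAlgHom k E F) (S : Subalgebra k F) : Subalgebra k E :=
  (S.comap Ψ.toAlgHom).map Ψ.domain.val

theorem mem_comap {Ψ : PartialAlgHom k E F} {S : Subalgebra k F} {a : E} :
    a ∈ Ψ.comap S ↔ ∃ b ∈ S, Ψ.Sends a b :=
  ⟨fun ⟨c, hc, hca⟩ => ⟨_, hc, hca ▸ c.2, congrArg _ (Subtype.ext hca.symm)⟩,
    fun ⟨_, hb, ha, hab⟩ => ⟨⟨a, ha⟩, by subst hab; exact hb, rfl⟩⟩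

end PartialAlgHom

/-! ### Specializations of rational function fields -/

theorem exists_partialAlgHom_sends_inv_mem {k D E F : Type*} [CommSemiring k] [CommRing D]
    [Field E] [Field F] [Algebra k D] [Algebra k E] [Algebra k F] {N : D →ₐ[k] E}
    (hN : Function.Injective N) (ψ : D →ₐ[k] F) {r : D} (hr : ψ r ≠ 0) :
    ∃ Ψ : PartialAlgHom k E F, (∀ d, Ψ.Sends (N d) (ψ d)) ∧ (N r)⁻¹ ∈ Ψ.domain := by
  have hNr : N r ≠ 0 := fun h => hr (by rw [(map_eq_zero_iff N hN).1 h, map_zero])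
  let ν : Localization.Away r →ₐ[k] E := IsLocalization.Away.liftAlgHom r (f := N) hNr.isUnit
  let ρ : Localization.Away r →ₐ[k] F := IsLocalization.Away.liftAlgHom r (f := ψ) hr.isUnit
  have hν (d : D) : ν (algebraMap D _ d) = N d := IsLocalization.Away.lift_eq r hNr.isUnit d
  have hρ (d : D) : ρ (algebraMap D _ d) = ψ d := IsLocalization.Away.lift_eq r hr.isUnit d
  have hνinj : Function.Injective ν :=
    (IsLocalization.lift_injective_iff _).2 fun x y =>
      ⟨fun h => (hν x).symm.trans ((congrArg ν h).trans (hν y)), fun h => congrArg _ (hN h)⟩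
  let e := AlgEquiv.ofInjective ν hνinj
  refine ⟨⟨ν.range, ρ.comp e.symm⟩, fun d => ⟨⟨_, hν d⟩, ?_⟩, IsLocalization.Away.invSelf r,
    eq_inv_of_mul_eq_one_right (show N r * ν _ = 1 from ?_)⟩
  · rw [← hρ, AlgHom.comp_apply]
    exact congrArg ρ (e.symm_apply_eq.2 (Subtype.ext (hν d).symm))
  · rw [← hν, ← map_mul, IsLocalization.Away.mul_invSelf, map_one]

theorem exists_algHom_comp_algebraMap_eq {k A B Ω : Type*} [CommRing k] [CommRing A]
    [CommRing B] [Algebra k A] [Algebra k B] [Algebra A B] [IsScalarTower k A B]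
    [Algebra.IsIntegral A B] [FaithfulSMul A B] [Field Ω] [IsAlgClosed Ω] [Algebra k Ω]
    (ρ : A →ₐ[k] Ω) : ∃ σ : B →ₐ[k] Ω, ∀ a, σ (algebraMap A B a) = ρ a := by
  have : (RingHom.ker ρ).IsPrime := RingHom.ker_isPrime ρ
  obtain ⟨⟨P, _, _⟩⟩ := (RingHom.ker ρ).nonempty_primesOver (S := B)
  let : Algebra (A ⧸ RingHom.ker ρ) Ω := (Ideal.kerLiftAlg ρ).toAlgebra
  have : FaithfulSMul (A ⧸ RingHom.ker ρ) Ω :=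
    (faithfulSMul_iff_algebraMap_injective _ _).2 (Ideal.kerLiftAlg_injective ρ)
  have : Module.IsTorsionFree (A ⧸ RingHom.ker ρ) Ω :=
    Module.isTorsionFree_iff_faithfulSMul.2 inferInstance
  have : Module.IsTorsionFree (A ⧸ RingHom.ker ρ) (B ⧸ P) :=
    Module.isTorsionFree_iff_faithfulSMul.2 inferInstance
  let σ : (B ⧸ P) →ₐ[A ⧸ RingHom.ker ρ] Ω := IsAlgClosed.lift
  have hσ (a : A) : σ (Ideal.Quotient.mk P (algebraMap A B a)) = ρ a :=
    σ.commutes (Ideal.Quotient.mk _ a)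
  refine ⟨{ (σ : (B ⧸ P) →+* Ω).comp (Ideal.Quotient.mk P) with
    commutes' := fun c => ?_ }, hσ⟩
  rw [IsScalarTower.algebraMap_apply k A B]
  exact (hσ _).trans (ρ.commutes c)

open Polynomial in
theorem exists_ne_zero_map_mul_eq_integralClosure_map {R K : Type*} [CommRing R] [IsDomain R]
    [Field K] [Algebra R K] [Algebra.IsAlgebraic R K] [FaithfulSMul R K]
    (T : Finset (RatFunc K)) :
    ∃ r : R[X], r ≠ 0 ∧ ∀ t ∈ T, ∃ p : (integralClosure R K)[X],
      algebraMap K[X] (RatFunc K) (r.map (algebraMap R K)) * t =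
        algebraMap K[X] (RatFunc K) (p.map (algebraMap (integralClosure R K) K)) := by
  let : Algebra R[X] K[X] := Polynomial.algebra R K
  have : Algebra.IsAlgebraic K[X] (RatFunc K) :=
    IsLocalization.isAlgebraic _ (nonZeroDivisors K[X])
  have : Algebra.IsAlgebraic R[X] (RatFunc K) := .trans R[X] K[X] (RatFunc K)
  obtain ⟨r, hr, hrT⟩ := Algebra.IsAlgebraic.exists_integral_multiples R[X] T
  refine ⟨r, hr, fun t ht => ?_⟩
  obtain ⟨q, hq⟩ := IsIntegrallyClosed.isIntegral_iff.1 ((hrT t ht).tower_top (A := K[X]))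
  have hqint : IsIntegral R[X] q :=
    (isIntegral_algHom_iff (IsScalarTower.toAlgHom R[X] K[X] (RatFunc K))
      (IsFractionRing.injective _ _)).1 (hq ▸ hrT t ht)
  have hqlift : q ∈ lifts (algebraMap (integralClosure R K) K) :=
    (lifts_iff_coeff_lifts q).2 fun n =>
      ⟨⟨q.coeff n, isIntegral_iff_isIntegral_coeff.1 hqint n⟩, rfl⟩
  obtain ⟨p, rfl⟩ := (mem_lifts q).1 hqlift
  exact ⟨p, (hq.trans (Algebra.smul_def r t)).symm⟩

open Polynomial in
theorem exists_partialAlgHom_ratFunc_sends {k A K F : Type*} [Field k] [CommRing A] [Field K]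
    [Field F] [Algebra k A] [Algebra k K] [Algebra k F] [Algebra A K] [IsScalarTower k A K]
    [FaithfulSMul A K] (σ : A →ₐ[k] F) {r : A[X]} (hr : r.map (σ : A →+* F) ≠ 0) :
    ∃ Ψ : PartialAlgHom k (RatFunc K) (RatFunc F),
      (∀ (p : A[X]) (t : RatFunc K), algebraMap K[X] _ (r.map (algebraMap A K)) * t =
        algebraMap K[X] _ (p.map (algebraMap A K)) → t ∈ Ψ.domain) ∧
      Ψ.Sends RatFunc.X RatFunc.X ∧
      ∀ a, Ψ.Sends (RatFunc.C (algebraMap A K a)) (RatFunc.C (σ a)) := by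
  let N : A[X] →ₐ[k] RatFunc K := (IsScalarTower.toAlgHom k K[X] (RatFunc K)).comp
    (mapAlgHom (IsScalarTower.toAlgHom k A K))
  let ψ : A[X] →ₐ[k] RatFunc F := (IsScalarTower.toAlgHom k F[X] (RatFunc F)).comp
    (mapAlgHom σ)
  have hN : Function.Injective N := (IsFractionRing.injective K[X] (RatFunc K)).comp
    (map_injective _ (FaithfulSMul.algebraMap_injective A K))
  have hψr : ψ r ≠ 0 := RatFunc.algebraMap_ne_zero hr
  obtain ⟨Ψ, hΨ, hΨr⟩ := exists_partialAlgHom_sends_inv_mem hN ψ hψr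
  refine ⟨Ψ, fun p t ht => ?_, ?_, fun a => ?_⟩
  · have hNr : N r ≠ 0 := fun h => hψr (by rw [(map_eq_zero_iff N hN).1 h, map_zero])
    rw [(eq_inv_mul_iff_mul_eq₀ hNr).2 ht]
    exact mul_mem hΨr (hΨ p).1
  · simpa [N, ψ] using hΨ X
  · simpa [N, ψ] using hΨ (C a)

theorem exists_mvPolynomial_forall_exists_partialAlgHom {k K ι : Type*} [Field k] [Field K]
    [Algebra k K] {w : ι → K} (hw : IsTranscendenceBasis k w) (T : Finset (RatFunc K)) :
    ∃ q : MvPolynomial ι k, q ≠ 0 ∧ ∀ (Ω : Type*) [Field Ω] [IsAlgClosed Ω] [Algebra k Ω]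
      (c : ι → Ω), MvPolynomial.aeval c q ≠ 0 →
        ∃ Ψ : PartialAlgHom k (RatFunc K) (RatFunc Ω), ↑T ⊆ (Ψ.domain : Set (RatFunc K)) ∧
          Ψ.Sends RatFunc.X RatFunc.X ∧ ∀ i, Ψ.Sends (RatFunc.C (w i)) (RatFunc.C (c i)) := by
  let R := Algebra.adjoin k (Set.range w)
  let A := integralClosure R K
  have : Algebra.IsAlgebraic R K := hw.isAlgebraic
  have : FaithfulSMul R A := FaithfulSMul.tower_bot R A K
  obtain ⟨r, hr, hrT⟩ := exists_ne_zero_map_mul_eq_integralClosure_map (R := R) T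
  let e : MvPolynomial ι k ≃ₐ[k] R := hw.1.aevalEquiv
  refine ⟨e.symm r.leadingCoeff, by simpa using hr, fun Ω _ _ _ c hc => ?_⟩
  obtain ⟨σ, hσ⟩ := exists_algHom_comp_algebraMap_eq (B := A)
    ((MvPolynomial.aeval c).comp (e.symm : R →ₐ[k] MvPolynomial ι k))
  have hσr : (r.map (algebraMap R A)).map (σ : A →+* Ω) ≠ 0 := fun h => hc <| by
    simpa [hσ] using congrArg (Polynomial.coeff · r.natDegree) h
  obtain ⟨Ψ, hΨT, hΨX, hΨC⟩ := exists_partialAlgHom_ratFunc_sends (K := K) σ hσr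
  refine ⟨Ψ, fun t ht => ?_, hΨX, fun i => ?_⟩
  · obtain ⟨p, hp⟩ := hrT t ht
    exact hΨT p t (by rwa [Polynomial.map_map, ← IsScalarTower.algebraMap_eq])
  · have hwi : w i = algebraMap A K (algebraMap R A (e (MvPolynomial.X i))) :=
      ((hw.1.algebraMap_aevalEquiv _).trans (MvPolynomial.aeval_X w i)).symm
    have hci : c i = σ (algebraMap R A (e (MvPolynomial.X i))) := by simp [hσ]
    rw [hwi, hci]
    exact hΨC _

theorem exists_aeval_mvPolynomial_ne_zero_of_isAlgebraic {k Ω ι κ : Type*} [Field k] [Field Ω]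
    [IsAlgClosed Ω] [Algebra k Ω] {ζ : κ → Ω} (hζ : AlgebraicIndependent k ζ)
    {q : MvPolynomial (ι ⊕ κ) k} (hq : q ≠ 0) :
    ∃ α : ι → Ω, (∀ i, IsAlgebraic k (α i)) ∧ MvPolynomial.aeval (Sum.elim α ζ) q ≠ 0 := by
  let g : ι ⊕ κ → MvPolynomial ι Ω := Sum.elim MvPolynomial.X (MvPolynomial.C ∘ ζ)
  have hg : AlgebraicIndependent k g := hζ.sumElim_comp (MvPolynomial.algebraicIndependent_X ι Ω)
  have heval (α : ι → Ω) :
      MvPolynomial.eval α (MvPolynomial.aeval g q) = MvPolynomial.aeval (Sum.elim α ζ) q := by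
    have : ((MvPolynomial.aeval α).restrictScalars k).comp (MvPolynomial.aeval g) =
        MvPolynomial.aeval (Sum.elim α ζ) := by
      ext (i | i) <;> simp [g]
    exact DFunLike.congr_fun this q
  have : IsAlgClosed (algebraicClosure k Ω) := (algebraicClosure.isAlgClosure k Ω).isAlgClosed
  have hinf : (algebraicClosure k Ω : Set Ω).Infinite :=
    Set.infinite_coe_iff.1 (IsAlgClosed.instInfinite (K := algebraicClosure k Ω))
  contrapose! hq
  refine hg.eq_zero_of_aeval_eq_zero q (MvPolynomial.funext_set _ (fun _ => hinf) fun α hα => ?_)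
  rw [heval, map_zero]
  exact hq α fun i => mem_algebraicClosure_iff.1 (hα i (Set.mem_univ i))

/-! ### Embeddings induced by specializations -/

theorem algHom_injective_of_algebraicIndependent_comp {ι R A B : Type*} [CommRing R] [Nontrivial R]
    [CommRing A] [IsDomain A] [CommRing B] [Algebra R A] [Algebra R B] {x : ι → A}
    (hx : IsTranscendenceBasis R x) {f : A →ₐ[R] B} (hfx : AlgebraicIndependent R (f ∘ x)) :
    Function.Injective f := by
  refine (injective_iff_map_eq_zero f).2 fun a ha => by_contra fun ha0 => ?_
  obtain ⟨c, hc0, d, hd⟩ := (hx.isAlgebraic.isAlgebraic a).exists_nonzero_dvd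
    (mem_nonZeroDivisors_of_ne_zero ha0)
  obtain ⟨p, rfl⟩ := hx.1.aevalEquiv.surjective c
  refine hc0 ((map_eq_zero_iff _ hx.1.aevalEquiv.injective).2 (hfx.eq_zero_of_aeval_eq_zero p ?_))
  have hfp : f (MvPolynomial.aeval x p) = 0 := by
    rw [← hx.1.algebraMap_aevalEquiv, hd, map_mul, ha, zero_mul]
  rwa [MvPolynomial.comp_aeval_apply] at hfp

theorem exists_forall_isAlgebraic_of_sends {k E : Type*} [Field k] [Field E] [Algebra k E]
    {R : Subalgebra k E} {t : E} (ht : IsAlgebraic R t) :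
    ∃ u : E, ∀ {F : Type*} [Field F] [Algebra k F] {Ψ : PartialAlgHom k E F}
      {Γ : IntermediateField k F} {τ : F}, R ≤ Ψ.comap Γ.toSubalgebra → u ∈ Ψ.domain →
        Ψ.Sends t τ → IsAlgebraic Γ τ := by
  obtain ⟨p, hp, hpt⟩ := ht
  have hlead : (p.leadingCoeff : E) ≠ 0 := by simpa using hp
  -- If the inverse of the leading coefficient is in the domain, then the image of `p` is not zero.
  refine ⟨(p.leadingCoeff : E)⁻¹, fun {F} _ _ Ψ Γ τ hR hu ⟨htΨ, hτ⟩ => ?_⟩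
  have hRΨ : R ≤ Ψ.domain := fun a ha => (PartialAlgHom.mem_comap.1 (hR ha)).choose_spec.2.1
  let ρ : R →ₐ[k] Ψ.domain := Subalgebra.inclusion hRΨ
  have hρ (a : R) : Ψ.toAlgHom (ρ a) ∈ Γ := by
    obtain ⟨b, hb, _, hab⟩ := PartialAlgHom.mem_comap.1 (hR a.2)
    exact hab.symm ▸ hb
  let g : R →+* Γ := RingHom.codRestrict (Ψ.toAlgHom.comp ρ : R →+* F) Γ hρ
  have hunit : IsUnit (ρ p.leadingCoeff) :=
    .of_mul_eq_one ⟨_, hu⟩ (Subtype.ext (mul_inv_cancel₀ hlead))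
  have hglead : g p.leadingCoeff ≠ 0 := fun h =>
    (hunit.map Ψ.toAlgHom).ne_zero (congrArg Subtype.val h)
  have hpt' : p.eval₂ (ρ : R →+* Ψ.domain) ⟨t, htΨ⟩ = 0 := Subtype.ext <|
    (Polynomial.hom_eval₂ p (ρ : R →+* Ψ.domain) Ψ.domain.val.toRingHom _).trans hpt
  refine ⟨p.map g, fun h => hglead ?_, ?_⟩
  · simpa using congrArg (Polynomial.coeff · p.natDegree) h
  · rw [Polynomial.aeval_def, Polynomial.eval₂_map, ← hτ]
    exact (Polynomial.hom_eval₂ p (ρ : R →+* Ψ.domain) (Ψ.toAlgHom : Ψ.domain →+* F) _).symm.trans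
      ((congrArg Ψ.toAlgHom hpt').trans (map_zero _))

theorem exists_algHom_of_sends_generators {k E F ι : Type*} [Field k] [Field E] [Field F]
    [Algebra k E] [Algebra k F] {s : Set E} {L : IntermediateField k E}
    (hL : IntermediateField.adjoin k s = L) {b : ι → L} (hb : IsTranscendenceBasis k b)
    {Ψ : PartialAlgHom k E F} (hs : s ⊆ Ψ.domain) {β : ι → F}
    (hbβ : ∀ i, Ψ.Sends (b i) (β i)) (hβ : AlgebraicIndependent k β) :
    ∃ e : L →ₐ[k] F, ∀ i, e (b i) = β i := by
  let D : Subalgebra k L := Ψ.domain.comap L.val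
  let ψ : D →ₐ[k] F := Ψ.toAlgHom.comp
    ((L.val.comp D.val).codRestrict Ψ.domain fun a => a.2)
  let bD (i : ι) : D := ⟨b i, (hbβ i).1⟩
  have hψb : ψ ∘ bD = β := funext fun i => (hbβ i).2
  have hψ : Function.Injective ψ :=
    algHom_injective_of_algebraicIndependent_comp (hb.of_comp D.val Subtype.val_injective (x := bD))
      (hψb ▸ hβ)
  have hsD : Algebra.adjoin k s ≤ Ψ.domain := Algebra.adjoin_le hs
  have hsL : Algebra.adjoin k s ≤ L.toSubalgebra :=
    hL ▸ IntermediateField.algebra_adjoin_le_adjoin k s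
  have : IsFractionRing D L := .of_field D L fun z => by
    obtain ⟨x, hx, y, hy, hxy⟩ := IntermediateField.mem_adjoin_iff_div.1 (hL.ge z.2)
    exact ⟨⟨⟨x, hsL hx⟩, hsD hx⟩, ⟨⟨y, hsL hy⟩, hsD hy⟩, Subtype.ext hxy⟩
  refine ⟨IsFractionRing.liftAlgHom hψ, fun i => ?_⟩
  exact (IsFractionRing.lift_algebraMap hψ (bD i)).trans (congrFun hψb i)

theorem isAlgebraic_adjoin_of_isTranscendenceBasis {k F ι κ : Type*} [Field k] [Field F]
    [Algebra k F] {β : ι → F} {τ : κ → F} (hτ : IsTranscendenceBasis k τ)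
    (hτβ : ∀ j,
      IsAlgebraic (algebraicClosure (IntermediateField.adjoin k (Set.range β)) F) (τ j)) :
    Algebra.IsAlgebraic (Algebra.adjoin k (Set.range β)) F := by
  have : Algebra.IsAlgebraic (IntermediateField.adjoin k (Set.range β)) F :=
    hτ.isAlgebraic_iff.2 fun j => (hτβ j).restrictScalars _
  exact ⟨fun a => IntermediateField.isAlgebraic_adjoin_iff.1 (this.isAlgebraic a)⟩

theorem PartialAlgHom.adjoin_le_comap_algebraicClosure {k E F ι κ : Type*} [Field k] [Field E]
    [Field F] [Algebra k E] [Algebra k F] {Ψ : PartialAlgHom k E F} {b : ι → E} {β : ι → F}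
    (hbβ : ∀ i, Ψ.Sends (b i) (β i)) {y : κ → E}
    (hy : ∀ i, ∃ α, IsAlgebraic k α ∧ Ψ.Sends (y i) α) :
    Algebra.adjoin k (Set.range (Sum.elim y b)) ≤ Ψ.comap (IntermediateField.restrictScalars k
      (algebraicClosure (IntermediateField.adjoin k (Set.range β)) F)).toSubalgebra := by
  refine Algebra.adjoin_le (Set.range_subset_iff.2 ?_)
  rintro (i | i) <;> refine PartialAlgHom.mem_comap.2 ?_
  · obtain ⟨α, hα, hyα⟩ := hy i
    exact ⟨α, mem_algebraicClosure_iff.2 (hα.tower_top _), hyα⟩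
  · exact ⟨β i, algebraMap_mem (algebraicClosure (IntermediateField.adjoin k (Set.range β)) F)
      ⟨β i, IntermediateField.subset_adjoin _ _ ⟨i, rfl⟩⟩, hbβ i⟩

theorem exists_finset_forall_exists_algHom_isAlgebraic {k E ι κ : Type*} [Field k] [Field E]
    [Algebra k E] [Finite ι] {L : IntermediateField k E} (hL : L.FG) {b : ι → L}
    (hb : IsTranscendenceBasis k b) {y : κ → E} (hy : IsTranscendenceBasis L y) (t : ι → E) :
    ∃ T : Finset E, ∀ {F : Type*} [Field F] [Algebra k F] {Ψ : PartialAlgHom k E F} {τ : ι → F},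
      (T : Set E) ⊆ Ψ.domain → (∀ i, ∃ α, IsAlgebraic k α ∧ Ψ.Sends (y i) α) →
        (∀ i, Ψ.Sends (t i) (τ i)) → IsTranscendenceBasis k τ →
          ∃ e : L →ₐ[k] F, Algebra.IsAlgebraic e.fieldRange F := by
  classical
  have := Fintype.ofFinite ι
  obtain ⟨s, hs⟩ := hL
  have hE := (hb.sumElim_comp hy).isAlgebraic
  choose u hu using fun i => exists_forall_isAlgebraic_of_sends (hE.isAlgebraic (t i))
  refine ⟨s ∪ Finset.univ.image (fun i => (b i : E)) ∪ Finset.univ.image u,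
    fun {F} _ _ Ψ τ hT hyα htτ hτ => ?_⟩
  simp only [Finset.coe_union, Finset.coe_image, Finset.coe_univ, Set.image_univ,
    Set.union_subset_iff, Set.range_subset_iff] at hT
  obtain ⟨⟨hsΨ, hbΨ⟩, huΨ⟩ := hT
  let β (i : ι) : F := Ψ.toAlgHom ⟨b i, hbΨ i⟩
  have hbβ (i : ι) : Ψ.Sends (b i) (β i) := ⟨hbΨ i, rfl⟩
  have hFβ : Algebra.IsAlgebraic (Algebra.adjoin k (Set.range β)) F :=
    isAlgebraic_adjoin_of_isTranscendenceBasis hτ fun i =>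
      hu i (PartialAlgHom.adjoin_le_comap_algebraicClosure hbβ hyα) (huΨ i) (htτ i)
  have hβ : IsTranscendenceBasis k β :=
    Algebra.IsAlgebraic.isTranscendenceBasis_of_lift_le_trdeg_of_finite k β
      hτ.lift_cardinalMk_eq_trdeg.le
  obtain ⟨e, he⟩ := exists_algHom_of_sends_generators hs hb hsΨ hbβ hβ.1
  have hle : Algebra.adjoin k (Set.range β) ≤ e.fieldRange.toSubalgebra :=
    Algebra.adjoin_le (Set.range_subset_iff.2 fun i => ⟨b i, he i⟩)
  exact ⟨e, ⟨fun a => (hFβ.isAlgebraic a).tower_top_of_subalgebra_le hle⟩⟩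

/-! ### Transcendence bases of rational function fields -/

theorem isTranscendenceBasis_adjoin_of_sumElim {R A ι κ : Type*} [CommRing R] [Nontrivial R]
    [CommRing A] [NoZeroDivisors A] [Algebra R A] {x : ι → A} {y : κ → A}
    (h : IsTranscendenceBasis R (Sum.elim x y)) :
    IsTranscendenceBasis (Algebra.adjoin R (Set.range y)) x := by
  have : Nontrivial A := h.1.algebraMap_injective.nontrivial
  have hx := (AlgebraicIndependent.sumElim_iff.1 h.1).2
  have hA := h.isAlgebraic
  refine hx.isTranscendenceBasis_iff_isAlgebraic.2 ⟨fun a => ?_⟩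
  have hle : Algebra.adjoin R (Set.range (Sum.elim x y)) ≤
      (Algebra.adjoin (Algebra.adjoin R (Set.range y)) (Set.range x)).restrictScalars R := by
    rw [Set.Sum.elim_range, Set.union_comm, Algebra.adjoin_union_eq_adjoin_adjoin]
  exact (hA.isAlgebraic a).tower_top_of_subalgebra_le hle

theorem nonempty_equiv_of_isTranscendenceBasis_sumElim {R A ι ι' κ : Type*} [CommRing R]
    [Nontrivial R] [CommRing A] [NoZeroDivisors A] [Algebra R A] {x : ι → A} {x' : ι' → A}
    {y : κ → A} (h : IsTranscendenceBasis R (Sum.elim x y))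
    (h' : IsTranscendenceBasis R (Sum.elim x' y)) : Nonempty (ι ≃ ι') :=
  have : Nontrivial A := h.1.algebraMap_injective.nontrivial
  Cardinal.lift_mk_eq'.1 <| (isTranscendenceBasis_adjoin_of_sumElim h).lift_cardinalMk_eq
    (isTranscendenceBasis_adjoin_of_sumElim h')

theorem isTranscendenceBasis_ratFunc_X (K : Type*) [Field K] :
    IsTranscendenceBasis K (fun _ : Unit => (RatFunc.X : RatFunc K)) := by
  have : Algebra.IsAlgebraic (Polynomial K) (RatFunc K) :=
    IsLocalization.isAlgebraic _ (nonZeroDivisors (Polynomial K))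
  convert (IsTranscendenceBasis.polynomial Unit K).algebraMap_comp (A := RatFunc K) using 1
  exact funext fun _ => RatFunc.algebraMap_X.symm

theorem isAlgebraic_adjoin_range_ratFunc_C {k K : Type*} [Field k] [Field K] [Algebra k K]
    {L : IntermediateField k (RatFunc K)} {a : RatFunc K} (haL : a ∈ L)
    (ha : a ∉ (RatFunc.C : K →+* RatFunc K).range) :
    Algebra.IsAlgebraic (Algebra.adjoin L (Set.range (RatFunc.C : K →+* RatFunc K)))
      (RatFunc K) := by
  let A := Algebra.adjoin L (Set.range (RatFunc.C : K →+* RatFunc K))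
  let : Algebra K A := ((RatFunc.C : K →+* RatFunc K).codRestrict A
    fun c => Algebra.subset_adjoin ⟨c, rfl⟩).toAlgebra
  have : IsScalarTower K A (RatFunc K) := .of_algebraMap_eq fun _ => rfl
  have haA : a ∈ A := algebraMap_mem A (⟨a, haL⟩ : L)
  let φ : A →ₐ[K] RatFunc K := IsScalarTower.toAlgHom K A (RatFunc K)
  have hle : Algebra.adjoin K {a} ≤ φ.range :=
    Algebra.adjoin_le (Set.singleton_subset_iff.2 ⟨⟨a, haA⟩, rfl⟩)
  have := RatFunc.isAlgebraic_adjoin_simple_X' a fun ⟨c, hc⟩ => ha ⟨c, hc.symm⟩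
  refine ⟨fun f => ?_⟩
  have hf : IsAlgebraic φ.range f :=
    (IntermediateField.isAlgebraic_adjoin_iff.1 (this.isAlgebraic f)).tower_top_of_subalgebra_le hle
  exact hf.of_ringHom_of_comp_eq φ.rangeRestrict (RingHom.id _) φ.rangeRestrict_surjective
    Function.injective_id rfl

theorem exists_isAlgClosed_isTranscendenceBasis {k ι : Type*} {K : Type v} [Field k] [Field K]
    [Algebra k K] {z : ι → K} (hz : AlgebraicIndependent k z) :
    ∃ (Ω : Type v) (_ : Field Ω) (_ : IsAlgClosed Ω) (_ : Algebra k Ω) (ζ : ι → Ω),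
      IsTranscendenceBasis k ζ := by
  let A := Algebra.adjoin k (Set.range z)
  let Ω := AlgebraicClosure (FractionRing A)
  have : Algebra.IsAlgebraic A (FractionRing A) := IsLocalization.isAlgebraic _ (nonZeroDivisors A)
  have : Algebra.IsAlgebraic A Ω := .trans A (FractionRing A) Ω
  have : FaithfulSMul A Ω := .trans A (FractionRing A) Ω
  have hA := hz.aevalEquiv.isTranscendenceBasis (.mvPolynomial ι k)
  exact ⟨Ω, inferInstance, inferInstance, inferInstance, _, hA.algebraMap_comp (A := Ω)⟩

theorem exists_isTranscendenceBasis_sumElim {R A ι : Type*} [CommRing R] [Nontrivial R]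
    [CommRing A] [NoZeroDivisors A] [Algebra R A] {y : ι → A} (hy : AlgebraicIndependent R y) :
    ∃ s : Set A, IsTranscendenceBasis R (Sum.elim ((↑) : s → A) y) := by
  obtain ⟨s, hs⟩ := exists_isTranscendenceBasis (Algebra.adjoin R (Set.range y)) A
  have hyS := hy.aevalEquiv.isTranscendenceBasis (.mvPolynomial ι R)
  refine ⟨s, ?_⟩
  convert hyS.sumElim_comp hs using 2
  exact funext fun i => by simp

theorem exists_isTranscendenceBasis_ratFunc_C_comp {k : Type*} {K : Type v} [Field k] [Field K]
    [Algebra k K] {L : IntermediateField k (RatFunc K)}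
    (hL : ∃ a ∈ L, a ∉ (RatFunc.C : K →+* RatFunc K).range) :
    ∃ (κ : Type v) (y : κ → K), IsTranscendenceBasis L (RatFunc.C ∘ y) ∧
      AlgebraicIndependent k y := by
  obtain ⟨a, haL, ha⟩ := hL
  have := isAlgebraic_adjoin_range_ratFunc_C haL ha
  obtain ⟨Y, hYC, hY⟩ := exists_isTranscendenceBasis_subset (R := L)
    (Set.range (RatFunc.C : K →+* RatFunc K))
  choose y hy using fun i : Y => hYC i.2
  have hCy : RatFunc.C ∘ y = ((↑) : Y → RatFunc K) := funext hy
  refine ⟨Y, y, hCy ▸ hY, .of_comp (IsScalarTower.toAlgHom k K (RatFunc K)) ?_⟩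
  exact (hCy ▸ hY.1 : AlgebraicIndependent L (RatFunc.C ∘ y)).restrictScalars
    (FaithfulSMul.algebraMap_injective k L)

theorem nonempty_equiv_unit_sum_of_isTranscendenceBasis_ratFunc {k K ι κ κ' : Type*} [Field k]
    [Field K] [Algebra k K] {L : IntermediateField k (RatFunc K)} {b : ι → L}
    (hb : IsTranscendenceBasis k b) {y : κ → K} (hy : IsTranscendenceBasis L (RatFunc.C ∘ y))
    {z : κ' → K} (hzy : IsTranscendenceBasis k (Sum.elim z y)) : Nonempty (ι ≃ Unit ⊕ κ') := by
  have hbL := (hb.sumElim_comp hy).comp_equiv (Equiv.sumComm ι κ)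
  have hX := (hzy.sumElim_comp (isTranscendenceBasis_ratFunc_X K)).comp_equiv
    (Equiv.sumAssoc Unit κ' κ)
  refine nonempty_equiv_of_isTranscendenceBasis_sumElim (R := k)
    (x := algebraMap L (RatFunc K) ∘ b) (y := RatFunc.C ∘ y)
    (x' := Sum.elim (fun _ => RatFunc.X) (RatFunc.C ∘ z)) ?_ ?_
  · convert hbL using 1
    ext (_ | _) <;> rfl
  · convert hX using 1
    ext ((_ | _) | _) <;> rfl

theorem exists_algHom_ratFunc_isAlgebraic_fieldRange {k : Type*} {K : Type v} [Field k] [Field K]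
    [Algebra k K] {L : IntermediateField k (RatFunc K)} (hLfg : L.FG)
    (hL : ∃ a ∈ L, a ∉ (RatFunc.C : K →+* RatFunc K).range) :
    ∃ (Ω : Type v) (_ : Field Ω) (_ : Algebra k Ω) (e : L →ₐ[k] RatFunc Ω),
      Algebra.IsAlgebraic e.fieldRange (RatFunc Ω) := by
  obtain ⟨s, hb⟩ := exists_isTranscendenceBasis k L
  have : Algebra.EssFiniteType k L := IntermediateField.essFiniteType_iff.2 hLfg
  have : Finite s := finite_of_isTranscendenceBasis hb
  obtain ⟨κ, y, hyL, hyk⟩ := exists_isTranscendenceBasis_ratFunc_C_comp hL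
  obtain ⟨Z, hzy⟩ := exists_isTranscendenceBasis_sumElim hyk
  obtain ⟨ε⟩ := nonempty_equiv_unit_sum_of_isTranscendenceBasis_ratFunc hb hyL hzy
  obtain ⟨Ω, _, _, _, ζ, hζ⟩ :=
    exists_isAlgClosed_isTranscendenceBasis (hzy.1.comp Sum.inl Sum.inl_injective)
  let t : Unit ⊕ Z → RatFunc K := Sum.elim (fun _ => RatFunc.X) fun j => RatFunc.C (j : K)
  obtain ⟨T, hT⟩ := exists_finset_forall_exists_algHom_isAlgebraic hLfg hb hyL (t ∘ ε)
  obtain ⟨q, hq, hspec⟩ :=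
    exists_mvPolynomial_forall_exists_partialAlgHom (hzy.comp_equiv (Equiv.sumComm κ Z)) T
  obtain ⟨α, hα, hαq⟩ := exists_aeval_mvPolynomial_ne_zero_of_isAlgebraic hζ.1 hq
  obtain ⟨Ψ, hTΨ, hX, hC⟩ := hspec Ω _ hαq
  have ht : ∀ j, Ψ.Sends (t j) (Sum.elim (fun _ => RatFunc.X) (RatFunc.C ∘ ζ) j)
    | Sum.inl _ => hX
    | Sum.inr j => hC (Sum.inr j)
  obtain ⟨e, he⟩ := hT hTΨ (fun i => ⟨RatFunc.C (α i), (hα i).algebraMap, hC (Sum.inl i)⟩)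
    (fun i => ht (ε i)) ((hζ.sumElim_comp (isTranscendenceBasis_ratFunc_X Ω)).comp_equiv ε)
  exact ⟨Ω, _, _, e, he⟩

/-! ### Descent to a finitely generated field of constants -/

theorem ratFunc_mapAlgHom_algebraMap {k R S : Type*} [CommRing R] [IsDomain R] [CommRing S]
    [IsDomain S] [CommSemiring k] [Algebra k (Polynomial R)] [Algebra k (Polynomial S)]
    (ψ : Polynomial R →ₐ[k] Polynomial S)
    (hψ : nonZeroDivisors (Polynomial R) ≤ (nonZeroDivisors (Polynomial S)).comap ψ)
    (p : Polynomial R) :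
    RatFunc.mapAlgHom ψ hψ (algebraMap (Polynomial R) (RatFunc R) p) =
      algebraMap (Polynomial S) (RatFunc S) (ψ p) := by
  rw [RatFunc.coe_mapAlgHom_eq_coe_map]
  simpa only [map_one, div_one] using RatFunc.map_apply_div ψ hψ p 1

theorem exists_intermediateField_fg_ratFunc_algHom {k Ω : Type*} [Field k] [Field Ω] [Algebra k Ω]
    (s : Finset (RatFunc Ω)) :
    ∃ M : IntermediateField k Ω, M.FG ∧
      ∃ φ : RatFunc M →ₐ[k] RatFunc Ω, (s : Set (RatFunc Ω)) ⊆ φ.fieldRange := by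
  classical
  let U : Finset Ω := s.biUnion fun f => f.num.coeffs ∪ f.denom.coeffs
  let M := IntermediateField.adjoin k (U : Set Ω)
  let φ : RatFunc M →ₐ[k] RatFunc Ω := RatFunc.mapAlgHom (Polynomial.mapAlgHom M.val)
    (nonZeroDivisors_le_comap_nonZeroDivisors_of_injective _
      (Polynomial.map_injective _ M.val.injective))
  have hφ (p : Polynomial Ω) (hp : (p.coeffs : Set Ω) ⊆ M) :
      algebraMap (Polynomial Ω) (RatFunc Ω) p ∈ φ.fieldRange := by
    obtain ⟨q, rfl⟩ : p ∈ Polynomial.lifts (M.val : M →+* Ω) :=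
      (Polynomial.lifts_iff_coeffs_subset_range p).2 fun c hc => ⟨⟨c, hp hc⟩, rfl⟩
    exact ⟨algebraMap _ _ q, ratFunc_mapAlgHom_algebraMap _ _ q⟩
  refine ⟨M, ⟨U, rfl⟩, φ, fun f hf => ?_⟩
  have hU : (f.num.coeffs ∪ f.denom.coeffs : Finset Ω) ⊆ U :=
    Finset.subset_biUnion_of_mem (fun f : RatFunc Ω => f.num.coeffs ∪ f.denom.coeffs) hf
  have hM : (U : Set Ω) ⊆ M := IntermediateField.subset_adjoin k _
  rw [← RatFunc.num_div_denom f]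
  exact div_mem (hφ _ fun c hc => hM (hU (Finset.mem_union_left _ hc)))
    (hφ _ fun c hc => hM (hU (Finset.mem_union_right _ hc)))

theorem exists_comp_eq_of_fieldRange_le {k L E F : Type*} [Field k] [Field L] [Field E] [Field F]
    [Algebra k L] [Algebra k E] [Algebra k F] {e : L →ₐ[k] F} {φ : E →ₐ[k] F}
    (h : e.fieldRange ≤ φ.fieldRange) : ∃ e' : L →ₐ[k] E, φ.comp e' = e := by
  let ψ := AlgEquiv.ofInjectiveField φ
  let e₀ : L →ₐ[k] φ.range := e.codRestrict φ.range fun l => h ⟨l, rfl⟩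
  exact ⟨(ψ.symm : φ.range →ₐ[k] E).comp e₀,
    AlgHom.ext fun l => congrArg Subtype.val (ψ.apply_symm_apply (e₀ l))⟩

theorem exists_intermediateField_fg_ratFunc_comp_eq {k L Ω : Type*} [Field k] [Field L] [Field Ω]
    [Algebra k L] [Algebra k Ω] [Algebra.EssFiniteType k L] (e : L →ₐ[k] RatFunc Ω) :
    ∃ M : IntermediateField k Ω, M.FG ∧
      ∃ (e' : L →ₐ[k] RatFunc M) (φ : RatFunc M →ₐ[k] RatFunc Ω), φ.comp e' = e := by
  classical
  obtain ⟨s, hs⟩ := IntermediateField.fg_top k L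
  obtain ⟨M, hM, φ, hφ⟩ := exists_intermediateField_fg_ratFunc_algHom (k := k) (s.image e)
  have hle : e.fieldRange ≤ φ.fieldRange := by
    rw [AlgHom.fieldRange_eq_map, ← hs, IntermediateField.adjoin_map,
      IntermediateField.adjoin_le_iff, ← Finset.coe_image]
    exact hφ
  obtain ⟨e', he'⟩ := exists_comp_eq_of_fieldRange_le hle
  exact ⟨M, hM, e', φ, he'⟩

theorem isAlgebraic_fieldRange_of_comp {k L E F : Type*} [Field k] [Field L] [Field E] [Field F]
    [Algebra k L] [Algebra k E] [Algebra k F] {e : L →ₐ[k] E} {φ : E →ₐ[k] F}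
    (h : Algebra.IsAlgebraic (φ.comp e).fieldRange F) : Algebra.IsAlgebraic e.fieldRange E := by
  let f : e.fieldRange →+* (φ.comp e).fieldRange :=
    (φ.comp e.fieldRange.val : e.fieldRange →+* F).codRestrict (φ.comp e).fieldRange
      fun a => a.2.elim fun l hl => ⟨l, congrArg φ hl⟩
  exact .of_ringHom_of_comp_eq f φ (fun b => b.2.elim fun l hl => ⟨⟨e l, l, rfl⟩, Subtype.ext hl⟩)
    φ.injective rfl

theorem finiteDimensional_of_essFiniteType_of_isAlgebraic {k E : Type*} [Field k] [Field E]
    [Algebra k E] [Algebra.EssFiniteType k E] (F : IntermediateField k E)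
    [Algebra.IsAlgebraic F E] : FiniteDimensional F E :=
  have : Algebra.EssFiniteType F E := .of_comp k F E
  Algebra.finite_of_essFiniteType_of_isAlgebraic

theorem nagata_ruledness_general {k : Type u} {K : Type v} [Field k] [Field K] [Algebra k K]
    {L : IntermediateField k (RatFunc K)} (hfg : L.FG)
    (hnc : ∃ a ∈ L, a ∉ (RatFunc.C : K →+* RatFunc K).range) :
    ∃ (M : Type v) (_ : Field M) (_ : Algebra k M) (emb : L →ₐ[k] RatFunc M),
      FiniteDimensional (RingHom.fieldRange (emb : L →+* RatFunc M)) (RatFunc M) := by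
  obtain ⟨Ω, _, _, e, he⟩ := exists_algHom_ratFunc_isAlgebraic_fieldRange hfg hnc
  have : Algebra.EssFiniteType k L := IntermediateField.essFiniteType_iff.2 hfg
  obtain ⟨M, hM, e', φ, rfl⟩ := exists_intermediateField_fg_ratFunc_comp_eq e
  have : Algebra.EssFiniteType k M := IntermediateField.essFiniteType_iff.2 hM
  have : Algebra.IsAlgebraic e'.fieldRange (RatFunc M) := isAlgebraic_fieldRange_of_comp he
  exact ⟨M, inferInstance, inferInstance, e',
    finiteDimensional_of_essFiniteType_of_isAlgebraic e'.fieldRange⟩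

/-- (Nagata)  Let `k, K, L` be fields with `k ⊆ K`, `k ⊆ L ⊆ K(x)` where `x` is
transcendental over `K`, `K` finitely generated over `k`, and `L ⊄ K`.  Then there are a
field `M ⊇ k` and an embedding of `L` into the rational function field `M(t)` such that
`M(t)` is a finite extension of the image of `L`. -/
theorem nagata_ruledness (k : Type u) (K : Type v) [Field k] [Field K] [Algebra k K]
    (hfg : ∃ s : Finset K, IntermediateField.adjoin k (s : Set K) = ⊤)
    (L : IntermediateField k (RatFunc K))
    (hnc : ∃ a : RatFunc K, a ∈ L ∧ a ∉ (RatFunc.C : K →+* RatFunc K).range) :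
    ∃ (M : Type v) (_ : Field M) (_ : Algebra k M) (emb : ↥L →ₐ[k] RatFunc M),
      FiniteDimensional ↥(RingHom.fieldRange (emb : ↥L →+* RatFunc M)) (RatFunc M) := by
  have : Algebra.EssFiniteType k K := IntermediateField.fg_top_iff.1 hfg
  exact nagata_ruledness_general (intermediateField_fg_of_essFiniteType L) hnc
end

section
/- Let k ⊆ K be fields, let K[s] be the polynomial ring in one variable over K, and let R be a k-subalgebra of K[s]. For each nonzero g ∈ K[s], let ḡ denote its leading form (the highest-degree homogeneous summand of g as a polynomial in s), and let k[R̄] be the k-subalgebra of K[s] generated by { r̄ : r ∈ R, r ≠ 0 }. Then tr.deg_k k[R̄] ≤ tr.deg_k R. -/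
/-! A polynomial relation among elements of `K[s]` forces a relation among their leading forms:
weigh each variable by the degree of the element substituted for it, and keep only the part of top
weight. Hence leading forms that are algebraically independent come from algebraically independent
elements. A transcendence basis of `k[R̄]` can be chosen among the generating leading forms, and
lifting its members to `R` gives an independent family of the same size. -/

open Polynomial

/-- The transcendence degree of an `R`-algebra `A`: the supremum of the cardinalities of
algebraically independent subsets of `A` over `R`. -/
noncomputable def trdeg (R A : Type*) [CommRing R] [CommRing A] [Algebra R A] : Cardinal :=
  ⨆ s : { s : Set A // AlgebraicIndependent R ((↑) : s → A) }, Cardinal.mk s.1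

/-- The leading form of a polynomial in one variable: its homogeneous summand of top degree, used
for the graded algebra of a subalgebra. The leading form of `0` is `0`. -/
noncomputable def leadingForm {K : Type*} [Semiring K] (f : K[X]) : K[X] :=
  C f.leadingCoeff * X ^ f.natDegree

theorem weightedHomogeneousComponent_weightedTotalDegree_ne_zero {R σ M : Type*} [CommSemiring R]
    [AddCommMonoid M] [LinearOrder M] [OrderBot M] (w : σ → M) {p : MvPolynomial σ R}
    (hp : p ≠ 0) :
    MvPolynomial.weightedHomogeneousComponent w (p.weightedTotalDegree w) p ≠ 0 := by
  obtain ⟨d, hd, hdeg⟩ := Finset.exists_mem_eq_sup p.support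
    (MvPolynomial.support_nonempty.mpr hp) (Finsupp.weight w)
  refine MvPolynomial.ne_zero_iff.mpr ⟨d, ?_⟩
  rw [MvPolynomial.coeff_weightedHomogeneousComponent, MvPolynomial.weightedTotalDegree,
    if_pos hdeg.symm]
  exact MvPolynomial.mem_support_iff.mp hd

section LeadingForms

variable {ι k K : Type*} [CommSemiring K]

theorem coeff_prod_sum_of_natDegree_le (s : Finset ι) (f : ι → K[X]) (n : ι → ℕ)
    (hf : ∀ i ∈ s, (f i).natDegree ≤ n i) :
    (∏ i ∈ s, f i).coeff (∑ i ∈ s, n i) = ∏ i ∈ s, (f i).coeff (n i) := by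
  induction s using Finset.cons_induction with
  | empty => simp
  | cons a s ha ih =>
    have hs : ∀ i ∈ s, (f i).natDegree ≤ n i := fun i hi => hf i (Finset.mem_cons_of_mem hi)
    have hprod : (∏ i ∈ s, f i).natDegree ≤ ∑ i ∈ s, n i :=
      (natDegree_prod_le s f).trans (Finset.sum_le_sum hs)
    rw [Finset.prod_cons, Finset.sum_cons, Finset.prod_cons,
      coeff_mul_add_eq_of_natDegree_le (hf a (Finset.mem_cons_self a s)) hprod, ih hs]

variable [CommSemiring k] [Algebra k K] (f : ι → K[X])

theorem natDegree_aeval_monomial_le (d : ι →₀ ℕ) (c : k) :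
    (MvPolynomial.aeval f (MvPolynomial.monomial d c)).natDegree ≤
      Finsupp.weight (fun i => (f i).natDegree) d := by
  rw [MvPolynomial.aeval_monomial, IsScalarTower.algebraMap_apply k K K[X], algebraMap_eq]
  refine (natDegree_C_mul_le _ _).trans ((natDegree_prod_le _ _).trans ?_)
  exact Finset.sum_le_sum fun i _ => natDegree_pow_le

theorem aeval_leadingForm_monomial (d : ι →₀ ℕ) (c : k) :
    MvPolynomial.aeval (fun i => leadingForm (f i)) (MvPolynomial.monomial d c) =
      monomial (Finsupp.weight (fun i => (f i).natDegree) d)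
        ((MvPolynomial.aeval f (MvPolynomial.monomial d c)).coeff
          (Finsupp.weight (fun i => (f i).natDegree) d)) := by
  have hcoeff : (d.prod fun i m => f i ^ m).coeff (Finsupp.weight (fun i => (f i).natDegree) d) =
      d.prod fun i m => (f i).leadingCoeff ^ m := by
    refine (coeff_prod_sum_of_natDegree_le _ _ _ fun i _ => natDegree_pow_le).trans ?_
    exact Finset.prod_congr rfl fun i _ => coeff_pow_of_natDegree_le le_rfl
  have hprod : (d.prod fun i m => leadingForm (f i) ^ m) =
      C (d.prod fun i m => (f i).leadingCoeff ^ m) *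
        X ^ Finsupp.weight (fun i => (f i).natDegree) d := by
    simp only [leadingForm, mul_pow, Finsupp.prod, Finset.prod_mul_distrib, Finsupp.weight_apply,
      Finsupp.sum, map_prod, map_pow, ← pow_mul', smul_eq_mul, Finset.prod_pow_eq_pow_sum]
  rw [MvPolynomial.aeval_monomial, MvPolynomial.aeval_monomial, hprod,
    IsScalarTower.algebraMap_apply k K K[X], algebraMap_eq, coeff_C_mul, hcoeff,
    ← C_mul_X_pow_eq_monomial, C_mul, mul_assoc]

theorem aeval_leadingForm_weightedHomogeneousComponent (p : MvPolynomial ι k) {n : ℕ}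
    (hn : p.weightedTotalDegree (fun i => (f i).natDegree) ≤ n) :
    MvPolynomial.aeval (fun i => leadingForm (f i))
        (MvPolynomial.weightedHomogeneousComponent (fun i => (f i).natDegree) n p) =
      monomial n ((MvPolynomial.aeval f p).coeff n) := by
  conv_rhs => rw [p.as_sum, map_sum, finsetSum_coeff, map_sum]
  rw [MvPolynomial.weightedHomogeneousComponent_apply, map_sum, Finset.sum_filter]
  refine Finset.sum_congr rfl fun d hd => ?_
  split_ifs with hdn
  · rw [aeval_leadingForm_monomial, hdn]
  · have hlt : Finsupp.weight (fun i => (f i).natDegree) d < n :=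
      lt_of_le_of_ne ((MvPolynomial.le_weightedTotalDegree _ hd).trans hn) hdn
    rw [coeff_eq_zero_of_natDegree_lt ((natDegree_aeval_monomial_le f d _).trans_lt hlt), map_zero]

end LeadingForms

theorem algebraicIndependent_of_leadingForm {ι k K : Type*} [CommRing k] [CommRing K]
    [Algebra k K] {f : ι → K[X]} (h : AlgebraicIndependent k fun i => leadingForm (f i)) :
    AlgebraicIndependent k f := by
  refine algebraicIndependent_iff.mpr fun p hp => ?_
  by_contra hp0
  refine weightedHomogeneousComponent_weightedTotalDegree_ne_zero (fun i => (f i).natDegree) hp0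
    (h.eq_zero_of_aeval_eq_zero _ ?_)
  rw [aeval_leadingForm_weightedHomogeneousComponent f p le_rfl, hp, coeff_zero, map_zero]

theorem trdeg_eq_algebra_trdeg (R A : Type*) [CommRing R] [CommRing A] [Algebra R A] :
    trdeg R A = Algebra.trdeg R A :=
  rfl

section TranscendenceDegree

variable {k A : Type*} [CommRing k] [CommRing A] [Algebra k A] [FaithfulSMul k A]

theorem faithfulSMul_subalgebra (S : Subalgebra k A) : FaithfulSMul k S :=
  (faithfulSMul_iff_algebraMap_injective k S).mpr
    (Function.Injective.of_comp (f := S.val) (FaithfulSMul.algebraMap_injective k A))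

variable [IsDomain A]

variable (k) in
theorem exists_subset_algebraicIndependent_mk_eq_trdeg_adjoin (s : Set A) :
    ∃ t ⊆ s, AlgebraicIndependent k ((↑) : t → A) ∧
      Cardinal.mk t = trdeg k (Algebra.adjoin k s) := by
  have : Nontrivial k := Module.nontrivial k A
  have : FaithfulSMul k (Algebra.adjoin k s) := faithfulSMul_subalgebra _
  have : Algebra.IsAlgebraic
      (Algebra.adjoin k (((↑) : Algebra.adjoin k s → A) ⁻¹' s)) (Algebra.adjoin k s) := by
    rw [Algebra.adjoin_adjoin_coe_preimage]
    exact ⟨fun x => isAlgebraic_algebraMap (⟨x, trivial⟩ : (⊤ : Subalgebra k _))⟩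
  obtain ⟨u, hus, hu⟩ := exists_isTranscendenceBasis_subset (R := k)
    (((↑) : Algebra.adjoin k s → A) ⁻¹' s)
  have hind : AlgebraicIndependent k fun x : u => ((x : Algebra.adjoin k s) : A) :=
    hu.1.map' (f := (Algebra.adjoin k s).val) Subtype.val_injective
  refine ⟨_, Set.image_subset_iff.mpr hus, hind.image, ?_⟩
  rw [Cardinal.mk_image_eq Subtype.val_injective, hu.cardinalMk_eq_trdeg, trdeg_eq_algebra_trdeg]

variable (k A) in
theorem trdeg_fractionRing : trdeg k (FractionRing A) = trdeg k A := by
  have : Nontrivial k := Module.nontrivial k A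
  have : Algebra.IsAlgebraic A (FractionRing A) := IsLocalization.isAlgebraic _ (nonZeroDivisors A)
  rw [trdeg_eq_algebra_trdeg, trdeg_eq_algebra_trdeg, ← trdeg_add_eq k A,
    trdeg_eq_zero (R := A), add_zero]

end TranscendenceDegree

theorem trdeg_leadingForms_le_general {k K : Type*} [CommRing k] [CommRing K] [IsDomain K]
    [Algebra k K] [FaithfulSMul k K] (R : Subalgebra k K[X]) :
    trdeg k (FractionRing (Algebra.adjoin k {p : K[X] | ∃ r ∈ R, r ≠ 0 ∧ p = leadingForm r})) ≤
      trdeg k (FractionRing R) := by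
  have : Nontrivial k := Module.nontrivial k K
  have (S : Subalgebra k K[X]) : FaithfulSMul k S := faithfulSMul_subalgebra S
  rw [trdeg_fractionRing, trdeg_fractionRing]
  obtain ⟨t, hts, ht, hcard⟩ := exists_subset_algebraicIndependent_mk_eq_trdeg_adjoin k
    {p : K[X] | ∃ r ∈ R, r ≠ 0 ∧ p = leadingForm r}
  choose r hrR _ hr using fun b : t => hts b.2
  have hind : AlgebraicIndependent k r :=
    algebraicIndependent_of_leadingForm (by simpa only [← hr] using ht)
  have hindR : AlgebraicIndependent k fun b : t => (⟨r b, hrR b⟩ : R) :=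
    AlgebraicIndependent.of_comp R.val hind
  rw [← hcard, trdeg_eq_algebra_trdeg]
  exact hindR.cardinalMk_le_trdeg

/-- Let `k ⊆ K` be fields, `K[s]` the polynomial ring, and `R` a `k`-subalgebra of `K[s]`.
If `k[R̄]` denotes the `k`-subalgebra generated by the leading forms of the nonzero elements
of `R`, then `tr.deg_k k[R̄] ≤ tr.deg_k R`. -/
theorem trdeg_leadingForms_le (k K : Type*) [Field k] [Field K] [Algebra k K]
    (R : Subalgebra k (Polynomial K)) :
    ∀ Rbar : Subalgebra k (Polynomial K),
      Rbar = Algebra.adjoin k {p : Polynomial K | ∃ r ∈ R, r ≠ 0 ∧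
          p = Polynomial.C r.leadingCoeff * Polynomial.X ^ r.natDegree} →
      trdeg k (FractionRing ↥Rbar) ≤ trdeg k (FractionRing ↥R) := by
  rintro Rbar rfl
  exact trdeg_leadingForms_le_general R
end
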